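/- Let k ≥ 3 be a positive integer such that k−1 is a power of the characteristic p of F_q, and let n = k(k−1)+1. Let a, b ∈ F_{q^n} with N_{q^n/q}(a) = (−1)^{k−1} and b = −∏_{i=0}^{k−1} a^{q^{ik+1}}. Let h be a positive integer, N = n·h, and let V be the set of roots of P(x) = x^{q^k} − b·x^q − a·x in F_{q^N}. Then V is a k-dimensional F_q-subspace of F_{q^N}; the orbit C = {αV : α ∈ F_{q^N}, α ≠ 0} consists of exactly (q^N−1)/(q−1) distinct subspaces; and the minimum of d(U,W) = dim_{F_q}U + dim_{F_q}W − 2·dim_{F_q}(U ∩ W) over all pairs of distinct subspaces U, W ∈ C equals 2k−2. -/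

import Mathlib

/-!
The norm condition makes `-a = c ^ (q ^ k - 1)` for some `c` (Hilbert 90 for the automorphism
`x ↦ x ^ q ^ k`, which generates the Galois group as `k` is coprime to `n`), and the product formula
for `b` then says that `V = c V₀`, where `V₀` is the set of roots of `x ^ q ^ k + x ^ q + x`. This
polynomial is `X ^ k + X + 1` evaluated at the Frobenius endomorphism. Since `k - 1` is a power of
the characteristic, `X ^ k + X + 1` divides `X ^ n - 1`, hence `X ^ N - 1`, which forces
`dim V₀ = k`.

If `x`, `y`, `α * x` and `α * y` all lie in `V`, eliminating the powers `q ^ k` from the four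
equations leaves `α ∈ F_q` or `y ∈ F_q x`. So `V` is a Sidon space, and distinct cyclic shifts of
a Sidon space meet in dimension at most one.
-/

open Module Polynomial
open scoped Pointwise

section SidonSpace

variable {K M : Type*} [Field K] [Field M] [Algebra K M] {V : Submodule K M}

/-- The subspace distance `d(U, W) = dim U + dim W - 2 dim (U ∩ W)`. For finite-dimensional `U` and
`W` the subtraction of natural numbers does not truncate. -/
noncomputable def subspaceDist (U W : Submodule K M) : ℕ :=
  finrank K U + finrank K W - 2 * finrank K (U ⊓ W : Submodule K M)

/-- Sidon spaces: subspaces in which a product of two nonzero elements determines the factors up to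
order and scalars in `K`. The usual condition, that `u * y = v * x` implies
`{K u, K y} = {K v, K x}`, is expressed here in terms of the ratio `α = u / x = v / y`. -/
def IsSidonSpace (V : Submodule K M) : Prop :=
  ∀ ⦃α x y : M⦄, x ∈ V → x ≠ 0 → y ∈ V → α * x ∈ V → α * y ∈ V →
    α ∈ (algebraMap K M).range ∨ y ∈ K ∙ x

lemma mem_units_smul_submodule_iff {α : Mˣ} {x : M} : x ∈ α • V ↔ (↑α⁻¹ : M) * x ∈ V := by
  rw [Units.val_inv_eq_inv_val]
  exact Set.mem_smul_set_iff_inv_smul_mem₀ α.ne_zero (V : Set M) x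

lemma finrank_units_smul_submodule (α : Mˣ) (V : Submodule K M) :
    finrank K (α • V : Submodule K M) = finrank K V :=
  (Submodule.equivMapOfInjective (DistribSMul.toLinearMap K M α)
    (MulAction.injective α) V).finrank_eq.symm

lemma setOf_coe_eq_mul_image_eq_orbit (V : Submodule K M) :
    {W : Submodule K M | ∃ α : M, α ≠ 0 ∧ (W : Set M) = (α * ·) '' V} = MulAction.orbit Mˣ V := by
  ext W
  constructor
  · rintro ⟨α, hα, hW⟩
    exact ⟨Units.mk0 α hα, SetLike.coe_injective hW.symm⟩
  · rintro ⟨α, rfl⟩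
    exact ⟨α, α.ne_zero, rfl⟩

lemma units_smul_submodule_eq_self {α : Mˣ} (hα : (α : M) ∈ (algebraMap K M).range)
    (V : Submodule K M) : α • V = V := by
  obtain ⟨c, hc⟩ := hα
  have hc0 : c ≠ 0 := by
    rintro rfl
    exact α.ne_zero (by rw [← hc, map_zero])
  ext x
  rw [mem_units_smul_submodule_iff, Units.val_inv_eq_inv_val, ← hc, ← map_inv₀, ← Algebra.smul_def,
    V.smul_mem_iff (inv_ne_zero hc0)]

lemma exists_mem_notMem_span_singleton (hV : 1 < finrank K V) :
    ∃ x ∈ V, x ≠ 0 ∧ ∃ y ∈ V, y ∉ K ∙ x := by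
  have hbot : V ≠ ⊥ := by
    rintro rfl
    simp at hV
  obtain ⟨x, hx, hx0⟩ := V.exists_mem_ne_zero_of_ne_bot hbot
  refine ⟨x, hx, hx0, ?_⟩
  by_contra! hspan
  have hle : finrank K V ≤ finrank K (K ∙ x) := Submodule.finrank_mono hspan
  rw [finrank_span_singleton hx0] at hle
  omega

namespace IsSidonSpace

lemma stabilizer_eq (hS : IsSidonSpace V) (hV : 1 < finrank K V) :
    MulAction.stabilizer Mˣ V = (Units.map (algebraMap K M : K →* M)).range := by
  ext α
  rw [MulAction.mem_stabilizer_iff]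
  constructor
  · intro hα
    have hmul : ∀ z ∈ V, (α : M) * z ∈ V := fun z hz ↦ by
      rw [← hα, mem_units_smul_submodule_iff, Units.inv_mul_cancel_left]
      exact hz
    obtain ⟨x, hx, hx0, y, hy, hyx⟩ := exists_mem_notMem_span_singleton hV
    obtain ⟨c, hc⟩ := (hS hx hx0 hy (hmul x hx) (hmul y hy)).resolve_right hyx
    have hc0 : c ≠ 0 := by
      rintro rfl
      exact α.ne_zero (by rw [← hc, map_zero])
    exact ⟨Units.mk0 c hc0, Units.ext hc⟩
  · rintro ⟨c, rfl⟩
    exact units_smul_submodule_eq_self ⟨(c : K), rfl⟩ V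

theorem natCard_orbit [Finite M] (hS : IsSidonSpace V) (hV : 1 < finrank K V) :
    Nat.card (MulAction.orbit Mˣ V) = (Nat.card M - 1) / (Nat.card K - 1) := by
  have : Finite K := Finite.of_injective _ (algebraMap K M).injective
  have hstab : Nat.card (MulAction.stabilizer Mˣ V) = Nat.card K - 1 := by
    rw [hS.stabilizer_eq hV, ← Nat.card_units]
    exact (Nat.card_congr (MonoidHom.ofInjective
      (Units.map_injective (algebraMap K M).injective)).toEquiv).symm
  have hpos : 0 < Nat.card K - 1 := Nat.sub_pos_of_lt Finite.one_lt_card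
  rw [Nat.card_coe_set_eq, ← MulAction.index_stabilizer, ← Nat.card_units M,
    ← (MulAction.stabilizer Mˣ V).index_mul_card, hstab, Nat.mul_div_cancel _ hpos]

lemma finrank_inf_units_smul_le_one (hS : IsSidonSpace V) {α : Mˣ} (hα : α • V ≠ V) :
    finrank K (V ⊓ α • V : Submodule K M) ≤ 1 := by
  rcases eq_or_ne (V ⊓ α • V) ⊥ with hbot | hbot
  · rw [hbot, finrank_bot]
    exact zero_le_one
  obtain ⟨x, ⟨hxV, hxα⟩, hx0⟩ := Submodule.exists_mem_ne_zero_of_ne_bot hbot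
  have hspan : V ⊓ α • V ≤ K ∙ x := by
    rintro y ⟨hyV, hyα⟩
    refine (hS hxV hx0 hyV (mem_units_smul_submodule_iff.mp hxα)
      (mem_units_smul_submodule_iff.mp hyα)).resolve_left fun hinv ↦ hα ?_
    rw [eq_comm, ← inv_smul_eq_iff]
    exact units_smul_submodule_eq_self hinv V
  exact (Submodule.finrank_mono hspan).trans_eq (finrank_span_singleton hx0)

lemma finrank_units_smul_inf_units_smul_le_one (hS : IsSidonSpace V) {α β : Mˣ}
    (hαβ : α • V ≠ β • V) : finrank K (α • V ⊓ β • V : Submodule K M) ≤ 1 := by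
  have hshift : α • V ⊓ β • V = α • (V ⊓ (α⁻¹ * β) • V) := by
    ext x
    simp only [Submodule.mem_inf, mem_units_smul_submodule_iff, mul_inv_rev, inv_inv,
      Units.val_mul, mul_assoc, Units.mul_inv_cancel_left]
  rw [hshift, finrank_units_smul_submodule]
  refine hS.finrank_inf_units_smul_le_one fun heq ↦ hαβ ?_
  rw [mul_smul, inv_smul_eq_iff] at heq
  exact heq.symm

lemma exists_units_smul_ne_finrank_inf_eq_one (hS : IsSidonSpace V) (hV : 1 < finrank K V) :
    ∃ α : Mˣ, V ≠ α • V ∧ finrank K (V ⊓ α • V : Submodule K M) = 1 := by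
  obtain ⟨x, hx, hx0, y, hy, hyx⟩ := exists_mem_notMem_span_singleton hV
  have hy0 : y ≠ 0 := fun hy0 ↦ hyx (hy0 ▸ zero_mem _)
  let α : Mˣ := Units.mk0 (y / x) (div_ne_zero hy0 hx0)
  have hα : α • V ≠ V := by
    intro heq
    rw [← MulAction.mem_stabilizer_iff, hS.stabilizer_eq hV] at heq
    obtain ⟨c, hc⟩ := heq
    have hcyx : algebraMap K M c = y / x := congrArg Units.val hc
    refine hyx (Submodule.mem_span_singleton.mpr ⟨c, ?_⟩)
    rw [Algebra.smul_def, hcyx, div_mul_cancel₀ y hx0]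
  have hmem : y ∈ V ⊓ α • V := by
    refine ⟨hy, mem_units_smul_submodule_iff.mpr ?_⟩
    rwa [Units.val_inv_eq_inv_val, Units.val_mk0, inv_div, div_mul_cancel₀ x hy0]
  have : FiniteDimensional K V := .of_finrank_pos (zero_lt_one.trans hV)
  have hpos : 0 < finrank K (V ⊓ α • V : Submodule K M) :=
    Submodule.one_le_finrank_iff.mpr (Submodule.ne_bot_iff _ |>.mpr ⟨y, hmem, hy0⟩)
  exact ⟨α, hα.symm, le_antisymm (hS.finrank_inf_units_smul_le_one hα) hpos⟩

theorem isLeast_subspaceDist_orbit (hS : IsSidonSpace V) (hV : 1 < finrank K V) :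
    IsLeast {r : ℕ | ∃ U ∈ MulAction.orbit Mˣ V, ∃ W ∈ MulAction.orbit Mˣ V,
      U ≠ W ∧ r = subspaceDist U W} (2 * finrank K V - 2) := by
  constructor
  · obtain ⟨α, hne, hinf⟩ := hS.exists_units_smul_ne_finrank_inf_eq_one hV
    refine ⟨V, MulAction.mem_orbit_self V, α • V, MulAction.mem_orbit V α, hne, ?_⟩
    rw [subspaceDist, finrank_units_smul_submodule, hinf, two_mul (finrank K V)]
  · rintro r ⟨_, ⟨α, rfl⟩, _, ⟨β, rfl⟩, hne, rfl⟩
    have hinf := hS.finrank_units_smul_inf_units_smul_le_one hne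
    simp only [subspaceDist, finrank_units_smul_submodule]
    omega

end IsSidonSpace

end SidonSpace

lemma pow_add_self_add_one_dvd_pow_sub_one {R : Type*} [CommRing R] (p : ℕ) [ExpChar R p] (m : ℕ)
    (x : R) : x ^ (p ^ m + 1) + x + 1 ∣ x ^ ((p ^ m + 1) * p ^ m + 1) - 1 := by
  have hdecomp : x ^ ((p ^ m + 1) * p ^ m + 1) - 1 =
      x * (x ^ (p ^ m + 1) + x + 1) ^ p ^ m - (x ^ (p ^ m + 1) + x + 1) := by
    rw [add_pow_expChar_pow, add_pow_expChar_pow, one_pow]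
    ring
  rw [hdecomp]
  exact dvd_sub (dvd_mul_of_dvd_right (dvd_pow_self _ (expChar_pow_pos R p m).ne') _) dvd_rfl

section Frobenius

variable {K M : Type*} [Field K] [Fintype K] [Field M] [Algebra K M]

lemma mem_range_algebraMap_of_pow_card_eq {x : M} (hx : x ^ Fintype.card K = x) :
    x ∈ (algebraMap K M).range := by
  have hroot : ((X ^ Nat.card K - X : K[X]).map (algebraMap K M)).IsRoot x := by
    simp [Nat.card_eq_fintype_card, hx]
  have hne : (X ^ Nat.card K - X : K[X]) ≠ 0 :=
    FiniteField.X_pow_card_sub_X_ne_zero K Finite.one_lt_card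
  exact splits_X_pow_nat_card_sub_X.mem_range_of_isRoot hne hroot

lemma frobenius_pow_apply (j : ℕ) (x : M) :
    ((FiniteField.frobeniusAlgHom K M).toLinearMap ^ j) x = x ^ Fintype.card K ^ j := by
  rw [End.pow_apply]
  exact congrFun (pow_iterate (Fintype.card K) j) x

lemma neg_pow_card_pow (j : ℕ) (x : M) :
    (-x) ^ Fintype.card K ^ j = -x ^ Fintype.card K ^ j := by
  simp only [← frobenius_pow_apply (K := K), map_neg]

/-- The linearized `q`-associate `∑ gᵢ X ^ q ^ i` of `g = ∑ gᵢ X ^ i`, where `q` is the cardinality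
of `K`. -/
noncomputable def linearizedAssociate (g : K[X]) : K[X] :=
  ∑ i ∈ Finset.range (g.natDegree + 1), C (g.coeff i) * X ^ Fintype.card K ^ i

lemma aeval_linearizedAssociate (g : K[X]) (x : M) :
    aeval x (linearizedAssociate g) =
      aeval (FiniteField.frobeniusAlgHom K M).toLinearMap g x := by
  rw [aeval_eq_sum_range (FiniteField.frobeniusAlgHom K M).toLinearMap, LinearMap.sum_apply]
  simp only [linearizedAssociate, map_sum, map_mul, aeval_C, map_pow, aeval_X,
    LinearMap.smul_apply, frobenius_pow_apply]
  simp only [Algebra.smul_def]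

lemma natDegree_linearizedAssociate_le (g : K[X]) :
    (linearizedAssociate g).natDegree ≤ Fintype.card K ^ g.natDegree := by
  refine natDegree_sum_le_of_forall_le _ _ fun i hi ↦ (natDegree_C_mul_X_pow_le _ _).trans ?_
  exact Nat.pow_le_pow_right Fintype.card_pos (Finset.mem_range_succ_iff.mp hi)

lemma linearizedAssociate_ne_zero {g : K[X]} (hg : g ≠ 0) : linearizedAssociate g ≠ 0 := by
  intro hzero
  have hlead : (linearizedAssociate g).coeff (Fintype.card K ^ g.natDegree) = g.leadingCoeff := by
    simp [linearizedAssociate, coeff_C_mul, coeff_X_pow,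
      Nat.pow_right_inj (Fintype.one_lt_card (α := K))]
  rw [hzero, coeff_zero] at hlead
  exact hg (leadingCoeff_eq_zero.mp hlead.symm)

lemma finrank_ker_aeval_frobenius_le {g : K[X]} (hg : g ≠ 0) :
    finrank K (LinearMap.ker (aeval (FiniteField.frobeniusAlgHom K M).toLinearMap g)) ≤
      g.natDegree := by
  have hker : (LinearMap.ker (aeval (FiniteField.frobeniusAlgHom K M).toLinearMap g) : Set M) =
      (linearizedAssociate g).rootSet M := by
    ext x
    rw [mem_rootSet, aeval_linearizedAssociate]
    exact (and_iff_right (linearizedAssociate_ne_zero hg)).symm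
  have : Finite (LinearMap.ker (aeval (FiniteField.frobeniusAlgHom K M).toLinearMap g)) :=
    (hker ▸ rootSet_finite (linearizedAssociate g) M).to_subtype
  rw [← Nat.pow_le_pow_iff_right (Fintype.one_lt_card (α := K)), ← Nat.card_eq_fintype_card,
    ← natCard_eq_pow_finrank, ← SetLike.coe_sort_coe, hker, Nat.card_coe_set_eq,
    Nat.card_eq_fintype_card]
  exact (ncard_rootSet_le _ _).trans (natDegree_linearizedAssociate_le g)

lemma finrank_ker_aeval_frobenius [Finite M] {g : K[X]} (hg : g ∣ X ^ finrank K M - 1) :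
    finrank K (LinearMap.ker (aeval (FiniteField.frobeniusAlgHom K M).toLinearMap g)) =
      g.natDegree := by
  set φ := (FiniteField.frobeniusAlgHom K M).toLinearMap with hφ
  have hXne : (X ^ finrank K M - 1 : K[X]) ≠ 0 := X_pow_sub_C_ne_zero finrank_pos 1
  obtain ⟨f, hf⟩ := hg
  have hg0 : g ≠ 0 := left_ne_zero_of_mul (hf ▸ hXne)
  have hf0 : f ≠ 0 := right_ne_zero_of_mul (hf ▸ hXne)
  have hdeg : g.natDegree + f.natDegree = finrank K M := by
    rw [← natDegree_mul hg0 hf0, ← hf]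
    exact natDegree_X_pow_sub_C
  have hcomp : aeval φ g * aeval φ f = 0 := by
    rw [← map_mul, ← hf, ← FiniteField.minpoly_frobeniusAlgHom K M, minpoly.aeval]
  have hrange : finrank K (LinearMap.range (aeval φ f)) ≤ finrank K (LinearMap.ker (aeval φ g)) :=
    Submodule.finrank_mono (LinearMap.range_le_ker_iff.mpr hcomp)
  have hrank := LinearMap.finrank_range_add_finrank_ker (aeval φ f)
  have hkerg := finrank_ker_aeval_frobenius_le (M := M) hg0
  have hkerf := finrank_ker_aeval_frobenius_le (M := M) hf0
  rw [← hφ] at hkerg hkerf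
  omega

/-- The roots in `M` of `x ^ q ^ k - b * x ^ q - a * x`, where `q` is the cardinality of `K`, as a
`K`-subspace of `M`. -/
def trinomialRoots (K : Type*) {M : Type*} [Field K] [Fintype K] [Field M] [Algebra K M]
    (k : ℕ) (a b : M) : Submodule K M :=
  LinearMap.ker ((FiniteField.frobeniusAlgHom K M).toLinearMap ^ k
    - b • (FiniteField.frobeniusAlgHom K M).toLinearMap - a • LinearMap.id)

variable {k : ℕ} {a b : M}

lemma mem_trinomialRoots {x : M} : x ∈ trinomialRoots K k a b ↔
    x ^ Fintype.card K ^ k - b * x ^ Fintype.card K - a * x = 0 := by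
  simp only [trinomialRoots, LinearMap.mem_ker, LinearMap.sub_apply, LinearMap.smul_apply,
    frobenius_pow_apply, AlgHom.toLinearMap_apply, FiniteField.frobeniusAlgHom_apply,
    LinearMap.id_apply, smul_eq_mul]

lemma coe_trinomialRoots : (trinomialRoots K k a b : Set M) =
    {x | x ^ Fintype.card K ^ k - b * x ^ Fintype.card K - a * x = 0} :=
  Set.ext fun _ ↦ mem_trinomialRoots

theorem isSidonSpace_trinomialRoots (ha : a ≠ 0) (hb : b ≠ 0) :
    IsSidonSpace (trinomialRoots K k a b) := by
  intro α x y hx hx0 hy hαx hαy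
  rw [mem_trinomialRoots] at hx hy hαx hαy
  set q := Fintype.card K
  rw [mul_pow, mul_pow] at hαx hαy
  have elim_x : b * (α ^ q ^ k - α ^ q) * x ^ q = a * (α - α ^ q ^ k) * x := by
    linear_combination hαx - α ^ q ^ k * hx
  have elim_y : b * (α ^ q ^ k - α ^ q) * y ^ q = a * (α - α ^ q ^ k) * y := by
    linear_combination hαy - α ^ q ^ k * hy
  by_cases hα : α ^ q ^ k - α ^ q = 0
  · left
    have hαk : α - α ^ q ^ k = 0 := by
      rw [hα, mul_zero, zero_mul, eq_comm] at elim_x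
      simpa [ha, hx0] using elim_x
    exact mem_range_algebraMap_of_pow_card_eq (by linear_combination -hα - hαk)
  · right
    have hyx : (y / x) ^ q = y / x := by
      rw [div_pow, div_eq_div_iff (pow_ne_zero _ hx0) hx0]
      apply mul_left_cancel₀ (mul_ne_zero hb hα)
      linear_combination x * elim_y - y * elim_x
    obtain ⟨c, hc⟩ := mem_range_algebraMap_of_pow_card_eq (K := K) hyx
    exact Submodule.mem_span_singleton.mpr ⟨c, by rw [Algebra.smul_def, hc, div_mul_cancel₀ y hx0]⟩

lemma units_smul_trinomialRoots {a' b' : M} (d : Mˣ)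
    (ha : a' * d ^ Fintype.card K ^ k = a * d)
    (hb : b' * d ^ Fintype.card K ^ k = b * d ^ Fintype.card K) :
    d • trinomialRoots K k a' b' = trinomialRoots K k a b := by
  ext x
  obtain ⟨y, rfl⟩ : ∃ y : M, d * y = x := ⟨↑d⁻¹ * x, d.mul_inv_cancel_left x⟩
  have hscale : (d * y) ^ Fintype.card K ^ k - b * (d * y) ^ Fintype.card K - a * (d * y) =
      d ^ Fintype.card K ^ k *
        (y ^ Fintype.card K ^ k - b' * y ^ Fintype.card K - a' * y) := by
    rw [mul_pow, mul_pow]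
    linear_combination y ^ Fintype.card K * hb + y * ha
  rw [mem_units_smul_submodule_iff, d.inv_mul_cancel_left, mem_trinomialRoots, mem_trinomialRoots,
    hscale, mul_eq_zero, or_iff_right (pow_ne_zero _ d.ne_zero)]

lemma trinomialRoots_neg_one_eq_ker_aeval : trinomialRoots K k (-1 : M) (-1) =
    LinearMap.ker (aeval (FiniteField.frobeniusAlgHom K M).toLinearMap (X ^ k + X + 1 : K[X])) := by
  ext x
  simp only [mem_trinomialRoots, LinearMap.mem_ker, map_add, map_pow, aeval_X, map_one,
    LinearMap.add_apply, frobenius_pow_apply, AlgHom.toLinearMap_apply,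
    FiniteField.frobeniusAlgHom_apply, End.one_apply, neg_mul, one_mul, sub_neg_eq_add]

theorem finrank_trinomialRoots_neg_one [Finite M] {p m : ℕ} [ExpChar K p] (hk : k = p ^ m + 1)
    (hdvd : k * (k - 1) + 1 ∣ finrank K M) :
    finrank K (trinomialRoots K k (-1 : M) (-1)) = k := by
  have hdeg : (X ^ k + X + 1 : K[X]).natDegree = k := by
    have hk1 : 1 < k := by
      have := expChar_pow_pos K p m
      omega
    compute_degree!
    · simp [hk1.ne, (zero_lt_one.trans hk1).ne']
    · exact hk1.le
  have hfactor : (X ^ k + X + 1 : K[X]) ∣ X ^ finrank K M - 1 := by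
    have hkn := pow_add_self_add_one_dvd_pow_sub_one p m (X : K[X])
    rw [← hk, ← Nat.sub_eq_of_eq_add hk] at hkn
    exact hkn.trans (dvd_pow_sub_one_of_dvd hdvd)
  rw [trinomialRoots_neg_one_eq_ker_aeval, finrank_ker_aeval_frobenius hfactor, hdeg]

end Frobenius

lemma pow_pow_eq_prod_mul {R : Type*} [CommMonoid R] {c u : R} {s : ℕ} (hc : c ^ s = u * c)
    (j : ℕ) : c ^ s ^ j = (∏ i ∈ Finset.range j, u ^ s ^ i) * c := by
  induction j with
  | zero => simp
  | succ j ih =>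
    rw [pow_succ, pow_mul, ih, mul_pow, hc, Finset.prod_range_succ', ← Finset.prod_pow, pow_zero,
      pow_one, mul_assoc]
    simp only [pow_succ, pow_mul]

lemma exists_pow_eq_of_pow_card_div_gcd_eq_one {G : Type*} [CommGroup G] [IsCyclic G] [Finite G]
    {d : ℕ} {u : G} (hu : u ^ (Nat.card G / (Nat.card G).gcd d) = 1) : ∃ c : G, c ^ d = u := by
  set e := Nat.card G / (Nat.card G).gcd d
  have hle : (powMonoidHom d : G →* G).range ≤ (powMonoidHom e).ker := by
    rintro _ ⟨c, rfl⟩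
    have hde : Nat.card G ∣ d * e := by
      rw [← Nat.mul_div_assoc _ (Nat.gcd_dvd_left _ _), mul_comm,
        Nat.mul_div_assoc _ (Nat.gcd_dvd_right _ _)]
      exact dvd_mul_right _ _
    rw [MonoidHom.mem_ker, powMonoidHom_apply, powMonoidHom_apply, ← pow_mul]
    exact orderOf_dvd_iff_pow_eq_one.mp ((orderOf_dvd_natCard c).trans hde)
  have hcard : Nat.card (powMonoidHom e : G →* G).ker ≤
      Nat.card (powMonoidHom d : G →* G).range := by
    rw [IsCyclic.card_powMonoidHom_ker, IsCyclic.card_powMonoidHom_range]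
    exact Nat.gcd_le_right _ (Nat.div_gcd_pos_of_pos_left _ Nat.card_pos)
  have hmem : u ∈ (powMonoidHom d : G →* G).range := by
    rw [Subgroup.eq_of_le_of_card_ge hle hcard]
    exact hu
  exact hmem

lemma norm_neg_of_odd_finrank {K L : Type*} [Field K] [Ring L] [Algebra K L]
    (hodd : Odd (finrank K L)) (a : L) : Algebra.norm K (-a) = -Algebra.norm K a := by
  rw [neg_eq_neg_one_mul, map_mul, ← map_one (algebraMap K L), ← map_neg, Algebra.norm_algebraMap,
    hodd.neg_one_pow, neg_one_mul]

section Descent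

variable {K L : Type*} [Field K] [Fintype K] [Field L] [Algebra K L]

lemma finrank_eq_of_card_eq_pow [Fintype L] {n : ℕ} (hL : Fintype.card L = Fintype.card K ^ n) :
    finrank K L = n :=
  Nat.pow_right_injective (Fintype.one_lt_card (α := K)) (card_eq_pow_finrank.symm.trans hL)

-- Hilbert 90 for the generator `x ↦ x ^ q ^ k` of the Galois group of `L / K`.
theorem exists_pow_card_pow_eq_mul_of_norm_eq_one [Finite L] {k : ℕ} (hk : (finrank K L).Coprime k)
    {u : L} (hu : Algebra.norm K u = 1) : ∃ c : L, c ≠ 0 ∧ c ^ Fintype.card K ^ k = u * c := by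
  have hu0 : u ≠ 0 := by
    rintro rfl
    simp at hu
  have hgcd : (Nat.card Lˣ).gcd (Fintype.card K ^ k - 1) = Fintype.card K - 1 := by
    rw [Nat.card_units, natCard_eq_pow_finrank (K := K), Nat.card_eq_fintype_card,
      Nat.pow_sub_one_gcd_pow_sub_one, hk, pow_one]
  have hpow : (Units.mk0 u hu0) ^
      (Nat.card Lˣ / (Nat.card Lˣ).gcd (Fintype.card K ^ k - 1)) = 1 := by
    rw [hgcd, Nat.card_units, ← Nat.card_eq_fintype_card]
    ext
    rw [Units.val_pow_eq_pow_val, Units.val_mk0, ← FiniteField.algebraMap_norm_eq_pow, hu, map_one,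
      Units.val_one]
  obtain ⟨c, hc⟩ := exists_pow_eq_of_pow_card_div_gcd_eq_one hpow
  refine ⟨c, c.ne_zero, ?_⟩
  have hcu : (c : L) ^ (Fintype.card K ^ k - 1) = u := congrArg Units.val hc
  rw [← hcu, ← pow_succ, Nat.sub_add_cancel (Nat.one_le_pow _ _ Fintype.card_pos)]

lemma prod_neg_pow_pow_pow_card {k : ℕ} (hneg : (-1 : L) ^ k = 1) (a : L) :
    (∏ i ∈ Finset.range k, (-a) ^ (Fintype.card K ^ k) ^ i) ^ Fintype.card K =
      ∏ i ∈ Finset.range k, a ^ Fintype.card K ^ (i * k + 1) := by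
  have hterm (i : ℕ) : ((-a) ^ (Fintype.card K ^ k) ^ i) ^ Fintype.card K =
      -a ^ Fintype.card K ^ (i * k + 1) := by
    rw [← neg_pow_card_pow (K := K), ← pow_mul, ← pow_mul, ← pow_succ, mul_comm k]
  simp only [← Finset.prod_pow, hterm, Finset.prod_neg, Finset.card_range, hneg, one_mul]

lemma pow_card_pow_finrank [Finite L] (c : L) : c ^ Fintype.card K ^ finrank K L = c := by
  have := Fintype.ofFinite L
  rw [← card_eq_pow_finrank, FiniteField.pow_card]

variable {p m k : ℕ} {a b : L}

lemma exists_trinomial_scaling_factor [Finite L] [ExpChar K p] (hk : k = p ^ m + 1)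
    (hn : finrank K L = k * (k - 1) + 1) (ha : Algebra.norm K a = (-1) ^ (k - 1))
    (hb : b = -∏ i ∈ Finset.range k, a ^ Fintype.card K ^ (i * k + 1)) :
    ∃ c : L, c ≠ 0 ∧ -1 * c ^ Fintype.card K ^ k = a * c ∧
      -1 * c ^ Fintype.card K ^ k = b * c ^ Fintype.card K := by
  set q := Fintype.card K
  have hnorm : Algebra.norm K (-a) = 1 := by
    have hodd : Odd (finrank K L) := hn ▸ (Nat.even_mul_pred_self k).add_one
    rw [norm_neg_of_odd_finrank hodd, ha, hk, Nat.add_sub_cancel, neg_one_pow_expChar_pow, neg_neg]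
  have hcoprime : (finrank K L).Coprime k := by simp [hn]
  obtain ⟨c, hc0, hc⟩ := exists_pow_card_pow_eq_mul_of_norm_eq_one hcoprime hnorm
  have hneg : (-1 : L) ^ k = 1 := by
    have := expChar_of_injective_algebraMap (algebraMap K L).injective p
    rw [hk, pow_succ, neg_one_pow_expChar_pow, neg_mul_neg, one_mul]
  have hperiod : (c ^ (q ^ k) ^ k) ^ q = c ^ q ^ k := by
    have hexp : k * k + 1 = finrank K L + k := by
      rw [hn, hk, Nat.add_sub_cancel]
      ring
    rw [← pow_mul, ← pow_mul, ← pow_succ, hexp, pow_add, pow_mul, pow_card_pow_finrank]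
  refine ⟨c, hc0, by rw [hc, neg_one_mul, neg_mul, neg_neg], ?_⟩
  rw [← hperiod, pow_pow_eq_prod_mul hc, mul_pow, prod_neg_pow_pow_pow_card hneg, hb, neg_one_mul,
    neg_mul]

variable {M : Type*} [Field M] [Algebra K M] [Algebra L M] [IsScalarTower K L M] [Finite M]

theorem finrank_trinomialRoots_algebraMap [ExpChar K p] (hk : k = p ^ m + 1)
    (hn : finrank K L = k * (k - 1) + 1) (ha : Algebra.norm K a = (-1) ^ (k - 1))
    (hb : b = -∏ i ∈ Finset.range k, a ^ Fintype.card K ^ (i * k + 1)) :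
    finrank K (trinomialRoots K k (algebraMap L M a) (algebraMap L M b)) = k := by
  have : Finite L := Finite.of_injective _ (algebraMap L M).injective
  obtain ⟨c, hc0, hca, hcb⟩ := exists_trinomial_scaling_factor hk hn ha hb
  let d : Mˣ := Units.map (algebraMap L M : L →* M) (Units.mk0 c hc0)
  rw [← units_smul_trinomialRoots d (a' := -1) (b' := -1), finrank_units_smul_submodule,
    finrank_trinomialRoots_neg_one hk (hn ▸ Dvd.intro _ (finrank_mul_finrank K L M))]
  · simpa [d] using congrArg (algebraMap L M) hca
  · simpa [d] using congrArg (algebraMap L M) hcb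

end Descent

/-- (Proposition `prop:costrcycl`.) Let `k ≥ 3` with `k-1` a power of the
characteristic `p`, `n = k(k-1)+1`, and `a, b ∈ F_{q^n}` with `N_{q^n/q}(a) = (-1)^{k-1}`
and `b = −∏_{i=0}^{k-1} a^{q^{ik+1}}`. For `N = n·h` let `V` be the set of roots of
`P(x) = x^{q^k} − b·x^q − a·x` in `F_{q^N}`. Then `V` is a `k`-dimensional `F_q`-subspace
of `F_{q^N}`, its orbit `C = {αV : α ≠ 0}` consists of exactly `(q^N-1)/(q-1)` distinct
subspaces, and the minimum subspace distance between distinct members of `C` is `2k-2`. -/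
theorem stmt_18 (p q : ℕ) (hp : p.Prime) (hq : ∃ m : ℕ, 0 < m ∧ q = p ^ m)
    (K L M : Type*) [Field K] [Field L] [Field M]
    [Fintype K] [Fintype L] [Fintype M]
    [Algebra K L] [Algebra L M] [Algebra K M] [IsScalarTower K L M]
    (hcardK : Fintype.card K = q)
    (k : ℕ) (hk : 3 ≤ k) (hkp : ∃ m : ℕ, k - 1 = p ^ m)
    (n : ℕ) (hnval : n = k * (k - 1) + 1) (hcardL : Fintype.card L = q ^ n)
    (h N : ℕ) (hh : 0 < h) (hNval : N = n * h) (hcardM : Fintype.card M = q ^ N)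
    (a b : L) (ha : a ^ ((q ^ n - 1) / (q - 1)) = (-1 : L) ^ (k - 1))
    (hb : b = - ∏ i ∈ Finset.range k, a ^ q ^ (i * k + 1))
    (V : Set M)
    (hV : V = {x : M | x ^ q ^ k - algebraMap L M b * x ^ q - algebraMap L M a * x = 0})
    (C : Set (Submodule K M))
    (hC : C = {W : Submodule K M | ∃ α : M, α ≠ 0 ∧ (W : Set M) = (α * ·) '' V}) :
    (∃ W : Submodule K M, (W : Set M) = V ∧ Module.finrank K W = k)
      ∧ Nat.card C = (q ^ N - 1) / (q - 1)
      ∧ IsLeast {r : ℕ | ∃ U ∈ C, ∃ W ∈ C, U ≠ W ∧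
          r = Module.finrank K U + Module.finrank K W
                - 2 * Module.finrank K (U ⊓ W : Submodule K M)}
        (2 * k - 2) := by
  have : Fact p.Prime := ⟨hp⟩
  obtain ⟨r, -, hqr⟩ := hq
  obtain ⟨m, hm⟩ := hkp
  have : CharP K p := charP_of_card_eq_prime_pow (hcardK.trans hqr)
  subst hcardK hV hC
  have hn : finrank K L = k * (k - 1) + 1 := (finrank_eq_of_card_eq_pow hcardL).trans hnval
  have hnorm : Algebra.norm K a = (-1) ^ (k - 1) := by
    apply (algebraMap K L).injective
    rw [FiniteField.algebraMap_norm_eq_pow, Nat.card_eq_fintype_card, Nat.card_eq_fintype_card,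
      hcardL, ha, map_pow, map_neg, map_one]
  have ha0 : a ≠ 0 :=
    (Algebra.norm_ne_zero_iff (R := K)).mp (hnorm ▸ pow_ne_zero _ (by simp))
  have hb0 : b ≠ 0 := by simp [hb, Finset.prod_eq_zero_iff, ha0]
  have hdim : finrank K (trinomialRoots K k (algebraMap L M a) (algebraMap L M b)) = k :=
    finrank_trinomialRoots_algebraMap (show k = p ^ m + 1 by omega) hn hnorm hb
  have hSidon : IsSidonSpace (trinomialRoots K k (algebraMap L M a) (algebraMap L M b)) :=
    isSidonSpace_trinomialRoots (by simpa using ha0) (by simpa using hb0)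
  rw [← coe_trinomialRoots, setOf_coe_eq_mul_image_eq_orbit]
  refine ⟨⟨_, rfl, hdim⟩, ?_, ?_⟩
  · rw [hSidon.natCard_orbit (by omega), Nat.card_eq_fintype_card, Nat.card_eq_fintype_card, hcardM]
  · simpa only [hdim, subspaceDist] using hSidon.isLeast_subspaceDist_orbit (by omega)
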